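/- Linear convolution estimate. For each α ∈ (1,2) there exists a constant c(α) such that for every K ≥ 0, every measurable vector field U : ℝ³ → ℝ³ with |U(x)| ≤ K/(1+|x|) for all x, and every continuous vector field v : ℝ³ → ℝ³ with ‖v‖_α < ∞, the function u : ℝ³ → ℝ³ defined componentwise by u_i(x) = ∫_{ℝ³} ∂_k G_ij(x−y) ( U_j(y) v_k(y) + v_j(y) U_k(y) ) dy (summation over j,k = 1,2,3) is well defined (the integral converges absolutely for every x) and satisfies ‖u‖_α ≤ c(α) K ‖v‖_α. -/

import Mathlib

open MeasureTheory Real Metric Filter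

noncomputable section

abbrev E3 : Type := EuclideanSpace ℝ (Fin 3)

def ee (j : Fin 3) : E3 := EuclideanSpace.single j 1

/-- the Green (Oseen) tensor of the Stokes operator -/
def G (i j : Fin 3) (x : E3) : ℝ :=
  (1 / (8 * π)) * ((if i = j then 1 else 0) / ‖x‖ + x i * x j / ‖x‖ ^ 3)

/-- `∂ₖ G_{ij}` -/
def dG (i j k : Fin 3) (x : E3) : ℝ := fderiv ℝ (G i j) x (ee k)

/-- the norm of the space `X_α` -/
def Xnorm (α : ℝ) (v : E3 → E3) : ℝ := ⨆ x : E3, (1 + ‖x‖) ^ α * ‖v x‖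

/-!
The Oseen tensor is homogeneous of degree `-1` and smooth away from the origin, so its derivatives
are bounded on the unit sphere and hence by a multiple of `‖x‖ ^ (-2)` everywhere. The integrand of
`u x` is therefore at most a multiple of `‖x - y‖ ^ (-2) * (1 + ‖y‖) ^ (-(1 + α))`.

Such a product of powers, with exponents `a, b < d < a + b` in dimension `d`, is controlled at the
scale `ρ = (1 + ‖x‖) / 2`: one of `‖x - y‖` and `1 + ‖y‖` is always at least `ρ` and at least the
other, so the product is dominated by kernels which behave like `‖z‖ ^ (-a)` or `‖z‖ ^ (-b)` below
the scale `ρ` and like `‖z‖ ^ (-(a + b))` above it. By scaling, their integrals are multiples of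
`ρ ^ (d - a - b)`, which is of order `(1 + ‖x‖) ^ (-α)` for `d = 3`, `a = 2`, `b = 1 + α`.
-/

section Homogeneous

variable {E F : Type*} [NormedAddCommGroup E] [NormedSpace ℝ E] [NormedAddCommGroup F]
  [NormedSpace ℝ F] {f : E → F} {m : ℝ}

lemma fderiv_smul_of_homogeneous (hf : ∀ t : ℝ, 0 < t → ∀ x, f (t • x) = t ^ m • f x)
    {t : ℝ} (ht : 0 < t) (x : E) : fderiv ℝ f (t • x) = t ^ (m - 1) • fderiv ℝ f x := by
  have h : t • fderiv ℝ f (t • x) = t ^ m • fderiv ℝ f x := by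
    rw [← fderiv_comp_smul, funext (hf t ht)]
    exact congrFun (fderiv_const_smul_field (t ^ m)) x
  rw [rpow_sub_one ht.ne', div_eq_inv_mul, mul_smul, ← h, inv_smul_smul₀ ht.ne']

lemma exists_norm_fderiv_le_of_homogeneous [FiniteDimensional ℝ E] (hsmooth : ContDiffOn ℝ 1 f {0}ᶜ)
    (hf : ∀ t : ℝ, 0 < t → ∀ x, f (t • x) = t ^ m • f x) :
    ∃ C, 0 ≤ C ∧ ∀ x ≠ 0, ‖fderiv ℝ f x‖ ≤ C * ‖x‖ ^ (m - 1) := by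
  have : ProperSpace E := FiniteDimensional.proper_real E
  have hcont : ContinuousOn (fderiv ℝ f) (sphere 0 1) :=
    (hsmooth.continuousOn_fderiv_of_isOpen isOpen_compl_singleton le_rfl).mono
      fun _ hx => ne_of_mem_sphere hx one_ne_zero
  obtain ⟨C, hC⟩ := (isCompact_sphere (0 : E) 1).exists_bound_of_continuousOn hcont
  refine ⟨max C 0, le_max_right C 0, fun x hx => ?_⟩
  have hx₀ : 0 < ‖x‖ := norm_pos_iff.mpr hx
  have hunit : ‖x‖⁻¹ • x ∈ sphere (0 : E) 1 := by
    simpa using norm_smul_inv_norm (𝕜 := ℝ) hx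
  calc ‖fderiv ℝ f x‖ = ‖fderiv ℝ f (‖x‖ • ‖x‖⁻¹ • x)‖ := by rw [smul_inv_smul₀ hx₀.ne']
    _ = ‖x‖ ^ (m - 1) * ‖fderiv ℝ f (‖x‖⁻¹ • x)‖ := by
      rw [fderiv_smul_of_homogeneous hf hx₀, norm_smul, norm_of_nonneg (by positivity)]
    _ ≤ ‖x‖ ^ (m - 1) * max C 0 := by gcongr; exact (hC _ hunit).trans (le_max_left C 0)
    _ = max C 0 * ‖x‖ ^ (m - 1) := mul_comm _ _

end Homogeneous

section OseenTensor

lemma contDiffOn_G (i j : Fin 3) {n : WithTop ℕ∞} : ContDiffOn ℝ n (G i j) {0}ᶜ := by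
  intro x hx
  have hx₀ : ‖x‖ ≠ 0 := norm_ne_zero_iff.mpr hx
  have hnorm : ContDiffAt ℝ n (fun y : E3 => ‖y‖) x := contDiffAt_norm ℝ hx
  have hcoord (l : Fin 3) : ContDiffAt ℝ n (fun y : E3 => y l) x := by fun_prop
  exact (contDiffAt_const.mul ((contDiffAt_const.div hnorm hx₀).add
    (((hcoord i).mul (hcoord j)).div (hnorm.pow 3) (pow_ne_zero 3 hx₀)))).contDiffWithinAt

lemma G_smul (i j : Fin 3) {t : ℝ} (ht : 0 < t) (x : E3) :
    G i j (t • x) = t ^ (-1 : ℝ) • G i j x := by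
  simp only [G, norm_smul, norm_of_nonneg ht.le, PiLp.smul_apply, smul_eq_mul, rpow_neg_one]
  field_simp

lemma exists_abs_dG_le :
    ∃ D, 0 ≤ D ∧ ∀ i j k : Fin 3, ∀ x ≠ 0, |dG i j k x| ≤ D * ‖x‖ ^ (-2 : ℝ) := by
  choose C hC₀ hC using fun p : Fin 3 × Fin 3 => exists_norm_fderiv_le_of_homogeneous
    (contDiffOn_G p.1 p.2) fun t ht x => G_smul p.1 p.2 ht x
  obtain ⟨D, hD⟩ := Finite.exists_le C
  refine ⟨D, (hC₀ (0, 0)).trans (hD (0, 0)), fun i j k x hx => ?_⟩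
  have hee : ‖ee k‖ = 1 := by rw [ee, PiLp.norm_single, norm_one]
  calc |dG i j k x| ≤ ‖fderiv ℝ (G i j) x‖ :=
        (fderiv ℝ (G i j) x).unit_le_opNorm (ee k) hee.le
    _ ≤ C (i, j) * ‖x‖ ^ (-1 - 1 : ℝ) := hC (i, j) x hx
    _ ≤ D * ‖x‖ ^ (-2 : ℝ) := by norm_num only; gcongr; exact hD (i, j)

lemma measurable_dG (i j k : Fin 3) : Measurable (dG i j k) :=
  measurable_fderiv_apply_const ℝ (G i j) (ee k)

end OseenTensor

section PowerConvolution

lemma integrableOn_Ioi_rpow_mul_max_one_rpow {p q : ℝ} (hp : -1 < p) (hpq : p + q < -1) :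
    IntegrableOn (fun t : ℝ => t ^ p * max 1 t ^ q) (Set.Ioi 0) := by
  rw [← Set.Ioc_union_Ioi_eq_Ioi zero_le_one]
  refine IntegrableOn.union ?_ ?_
  · have h : IntegrableOn (fun t : ℝ => t ^ p) (Set.Ioc 0 1) :=
      (intervalIntegrable_iff_integrableOn_Ioc_of_le zero_le_one).mp
        (intervalIntegral.intervalIntegrable_rpow' hp)
    refine h.congr_fun (fun t ht => ?_) measurableSet_Ioc
    simp only [max_eq_left ht.2, one_rpow, mul_one]
  · refine (integrableOn_Ioi_rpow_of_lt hpq zero_lt_one).congr_fun (fun t ht => ?_)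
      measurableSet_Ioi
    simp only [max_eq_right (Set.mem_Ioi.mp ht).le, rpow_add (zero_lt_one.trans ht)]

variable {E : Type*} [NormedAddCommGroup E]

/-- The radial kernel on `E` equal to `‖z‖ ^ (-a)` below the scale `ρ`, up to the factor
`ρ ^ (-b)`, and to `‖z‖ ^ (-(a + b))` above it: a majorant whose integral scales exactly in `ρ`.
For `a ≠ 0` it takes the junk value `0` at the origin instead of blowing up. -/
def radialKernel (a b ρ : ℝ) (z : E) : ℝ := ‖z‖ ^ (-a) * max ρ ‖z‖ ^ (-b)

lemma radialKernel_nonneg (a b ρ : ℝ) (z : E) : 0 ≤ radialKernel a b ρ z :=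
  mul_nonneg (by positivity) (rpow_nonneg (le_max_of_le_right (norm_nonneg z)) _)

lemma rpow_norm_sub_mul_rpow_le_radialKernel {a b : ℝ} (ha : 0 ≤ a) (hb : 0 ≤ b) (x : E) {y : E}
    (hy : y ≠ 0) :
    ‖x - y‖ ^ (-a) * (1 + ‖y‖) ^ (-b) ≤
      radialKernel b a ((1 + ‖x‖) / 2) y + radialKernel a b ((1 + ‖x‖) / 2) (x - y) := by
  have hy₀ : 0 < ‖y‖ := norm_pos_iff.mpr hy
  have hρ : 0 < (1 + ‖x‖) / 2 := by positivity
  have htri : ‖x‖ ≤ ‖x - y‖ + ‖y‖ := norm_le_norm_sub_add x y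
  rcases le_total (1 + ‖y‖) ‖x - y‖ with hfar | hnear
  · refine le_add_of_le_of_nonneg ?_ (radialKernel_nonneg _ _ _ _)
    have hmax : max ((1 + ‖x‖) / 2) ‖y‖ ≤ ‖x - y‖ := max_le (by linarith) (by linarith)
    calc ‖x - y‖ ^ (-a) * (1 + ‖y‖) ^ (-b)
        ≤ max ((1 + ‖x‖) / 2) ‖y‖ ^ (-a) * ‖y‖ ^ (-b) := by
          gcongr ?_ * ?_
          · exact rpow_le_rpow_of_nonpos (lt_max_of_lt_left hρ) hmax (neg_nonpos.mpr ha)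
          · exact rpow_le_rpow_of_nonpos hy₀ (by linarith) (neg_nonpos.mpr hb)
      _ = radialKernel b a ((1 + ‖x‖) / 2) y := mul_comm _ _
  · refine le_add_of_nonneg_of_le (radialKernel_nonneg _ _ _ _) ?_
    have hmax : max ((1 + ‖x‖) / 2) ‖x - y‖ ≤ 1 + ‖y‖ := max_le (by linarith) hnear
    exact mul_le_mul_of_nonneg_left
      (rpow_le_rpow_of_nonpos (lt_max_of_lt_left hρ) hmax (neg_nonpos.mpr hb)) (by positivity)

variable [NormedSpace ℝ E]

lemma radialKernel_eq_rpow_mul (a b : ℝ) {ρ : ℝ} (hρ : 0 < ρ) (z : E) :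
    radialKernel a b ρ z = ρ ^ (-a - b) * radialKernel a b 1 (ρ⁻¹ • z) := by
  have hz : ‖z‖ = ρ * ‖ρ⁻¹ • z‖ := by
    rw [norm_smul, norm_inv, norm_of_nonneg hρ.le, mul_inv_cancel_left₀ hρ.ne']
  have hmax : max ρ ‖z‖ = ρ * max 1 ‖ρ⁻¹ • z‖ := by
    rw [mul_max_of_nonneg _ _ hρ.le, ← hz, mul_one]
  rw [radialKernel, radialKernel, hmax, hz, mul_rpow hρ.le (norm_nonneg _),
    mul_rpow hρ.le (by positivity), sub_eq_add_neg, rpow_add hρ]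
  ring

variable [FiniteDimensional ℝ E] [MeasurableSpace E] [BorelSpace E] (μ : Measure E)
  [μ.IsAddHaarMeasure]

local notation "dim" => Module.finrank ℝ

lemma integral_radialKernel (a b : ℝ) {ρ : ℝ} (hρ : 0 < ρ) :
    ∫ z, radialKernel a b ρ z ∂μ = ρ ^ (dim E - a - b : ℝ) * ∫ z, radialKernel a b 1 z ∂μ := by
  simp only [radialKernel_eq_rpow_mul a b hρ]
  rw [integral_const_mul, Measure.integral_comp_inv_smul μ (radialKernel a b 1) ρ, smul_eq_mul,
    abs_of_pos (by positivity), ← mul_assoc, ← rpow_natCast, ← rpow_add hρ]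
  ring_nf

variable [Nontrivial E] {a b ρ : ℝ}

lemma integrable_radialKernel (ha : a < dim E) (hab : dim E < a + b) (hρ : 0 < ρ) :
    Integrable (radialKernel a b ρ) μ := by
  suffices h : Integrable (radialKernel a b 1) μ by
    rw [funext (radialKernel_eq_rpow_mul a b hρ)]
    exact (h.comp_smul (inv_ne_zero hρ.ne')).const_mul _
  refine (integrable_fun_norm_addHaar μ (f := fun t : ℝ => t ^ (-a) * max 1 t ^ (-b))).mpr ?_
  have hd : ((dim E - 1 : ℕ) : ℝ) = dim E - 1 := Nat.cast_pred Module.finrank_pos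
  refine (integrableOn_Ioi_rpow_mul_max_one_rpow (p := dim E - 1 - a) (q := -b)
    (by linarith) (by linarith)).congr_fun (fun t ht => ?_) measurableSet_Ioi
  simp only [smul_eq_mul]
  rw [← mul_assoc, ← rpow_natCast, hd, ← rpow_add ht, ← sub_eq_add_neg]

lemma integrable_radialKernel_add (ha : a < dim E) (hb : b < dim E) (hab : dim E < a + b)
    (hρ : 0 < ρ) (x : E) :
    Integrable (fun y => radialKernel b a ρ y + radialKernel a b ρ (x - y)) μ :=
  (integrable_radialKernel μ hb (add_comm a b ▸ hab) hρ).add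
    ((integrable_radialKernel μ ha hab hρ).comp_sub_left x)

lemma ae_rpow_norm_sub_mul_rpow_le_radialKernel (ha : 0 ≤ a) (hb : 0 ≤ b) (x : E) :
    ∀ᵐ y ∂μ, ‖x - y‖ ^ (-a) * (1 + ‖y‖) ^ (-b) ≤
      radialKernel b a ((1 + ‖x‖) / 2) y + radialKernel a b ((1 + ‖x‖) / 2) (x - y) := by
  filter_upwards [μ.ae_ne 0] with y hy
  exact rpow_norm_sub_mul_rpow_le_radialKernel ha hb x hy

lemma integrable_rpow_norm_sub_mul_rpow (ha : a < dim E) (hb : b < dim E) (hab : dim E < a + b)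
    (x : E) : Integrable (fun y => ‖x - y‖ ^ (-a) * (1 + ‖y‖) ^ (-b)) μ := by
  have hρ : 0 < (1 + ‖x‖) / 2 := by positivity
  refine (integrable_radialKernel_add μ ha hb hab hρ x).mono' (by fun_prop) ?_
  filter_upwards [ae_rpow_norm_sub_mul_rpow_le_radialKernel μ
    (by linarith : 0 ≤ a) (by linarith : 0 ≤ b) x] with y hy
  rwa [norm_of_nonneg (by positivity)]

lemma exists_integral_rpow_norm_sub_mul_rpow_le (ha : a < dim E) (hb : b < dim E)
    (hab : dim E < a + b) :
    ∃ C, ∀ x : E,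
      ∫ y, ‖x - y‖ ^ (-a) * (1 + ‖y‖) ^ (-b) ∂μ ≤ C * (1 + ‖x‖) ^ (dim E - a - b : ℝ) := by
  refine ⟨((∫ z, radialKernel b a 1 z ∂μ) + ∫ z, radialKernel a b 1 z ∂μ) / 2 ^ (dim E - a - b : ℝ),
    fun x => ?_⟩
  have hρ : 0 < (1 + ‖x‖) / 2 := by positivity
  calc ∫ y, ‖x - y‖ ^ (-a) * (1 + ‖y‖) ^ (-b) ∂μ
      ≤ ∫ y, radialKernel b a ((1 + ‖x‖) / 2) y + radialKernel a b ((1 + ‖x‖) / 2) (x - y) ∂μ :=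
        integral_mono_ae (integrable_rpow_norm_sub_mul_rpow μ ha hb hab x)
          (integrable_radialKernel_add μ ha hb hab hρ x)
          (ae_rpow_norm_sub_mul_rpow_le_radialKernel μ (by linarith) (by linarith) x)
    _ = (∫ y, radialKernel b a ((1 + ‖x‖) / 2) y ∂μ) +
          ∫ z, radialKernel a b ((1 + ‖x‖) / 2) z ∂μ := by
        rw [integral_add (integrable_radialKernel μ hb (add_comm a b ▸ hab) hρ)
            ((integrable_radialKernel μ ha hab hρ).comp_sub_left x),
          integral_sub_left_eq_self (radialKernel a b ((1 + ‖x‖) / 2)) μ]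
    _ = _ := by
        rw [integral_radialKernel μ b a hρ, integral_radialKernel μ a b hρ, sub_right_comm _ b a,
          div_rpow (by positivity) zero_le_two]
        ring

end PowerConvolution

section EuclideanSpace

variable {ι : Type*} [Fintype ι]

lemma norm_le_card_mul_of_norm_apply_le {w : EuclideanSpace ℝ ι} {B : ℝ} (h : ∀ i, ‖w i‖ ≤ B) :
    ‖w‖ ≤ Fintype.card ι * B := by
  have hsum : ‖w‖ ≤ ∑ i, ‖w i‖ := by
    rw [EuclideanSpace.norm_eq]
    exact sqrt_le_iff.mpr ⟨by positivity,
      Finset.sum_sq_le_sq_sum_of_nonneg fun i _ => norm_nonneg _⟩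
  simpa using hsum.trans (Finset.sum_le_card_nsmul _ _ B fun i _ => h i)

lemma norm_apply_mul_add_le (a b : EuclideanSpace ℝ ι) (j k : ι) :
    ‖a j * b k + b j * a k‖ ≤ 2 * (‖a‖ * ‖b‖) := by
  calc ‖a j * b k + b j * a k‖ ≤ ‖a j‖ * ‖b k‖ + ‖b j‖ * ‖a k‖ := by
        simpa only [norm_mul] using norm_add_le (a j * b k) (b j * a k)
    _ ≤ ‖a‖ * ‖b‖ + ‖b‖ * ‖a‖ := by gcongr <;> exact PiLp.norm_apply_le _ _
    _ = 2 * (‖a‖ * ‖b‖) := by ring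

lemma norm_sum_mul_add_le {T : ι → ι → ℝ} {M : ℝ} (hT : ∀ j k, ‖T j k‖ ≤ M)
    (a b : EuclideanSpace ℝ ι) :
    ‖∑ j, ∑ k, T j k * (a j * b k + b j * a k)‖ ≤
      2 * Fintype.card ι ^ 2 * M * (‖a‖ * ‖b‖) := by
  have hterm (j k : ι) : ‖T j k * (a j * b k + b j * a k)‖ ≤ M * (2 * (‖a‖ * ‖b‖)) := by
    rw [norm_mul]
    exact mul_le_mul (hT j k) (norm_apply_mul_add_le a b j k) (norm_nonneg _)
      ((norm_nonneg _).trans (hT j k))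
  calc ‖∑ j, ∑ k, T j k * (a j * b k + b j * a k)‖
      ≤ ∑ _j : ι, ∑ _k : ι, M * (2 * (‖a‖ * ‖b‖)) :=
        norm_sum_le_of_le _ fun j _ => norm_sum_le_of_le _ fun k _ => hterm j k
    _ = 2 * Fintype.card ι ^ 2 * M * (‖a‖ * ‖b‖) := by
        simp only [Finset.sum_const, Finset.card_univ, nsmul_eq_mul]
        ring

end EuclideanSpace

section Xnorm

variable {α : ℝ} {v : E3 → E3}

lemma Xnorm_nonneg (α : ℝ) (v : E3 → E3) : 0 ≤ Xnorm α v :=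
  iSup_nonneg fun x => by positivity

lemma norm_le_Xnorm_mul_rpow
    (hv : BddAbove (Set.range fun x : E3 => (1 + ‖x‖) ^ α * ‖v x‖)) (x : E3) :
    ‖v x‖ ≤ Xnorm α v * (1 + ‖x‖) ^ (-α) := by
  have h : (1 + ‖x‖) ^ α * ‖v x‖ ≤ Xnorm α v := le_ciSup hv x
  rwa [rpow_neg (by positivity), ← div_eq_mul_inv, le_div_iff₀' (by positivity)]

lemma Xnorm_le_of_norm_le_mul_rpow {M : ℝ} (h : ∀ x, ‖v x‖ ≤ M * (1 + ‖x‖) ^ (-α)) :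
    Xnorm α v ≤ M := by
  refine ciSup_le fun x => ?_
  have hx := h x
  rwa [rpow_neg (by positivity), ← div_eq_mul_inv, le_div_iff₀' (by positivity)] at hx

end Xnorm

section OseenConvolution

/-- The integrand `∂ₖ G_{ij}(x - y) (U_j v_k + v_j U_k)(y)`, summed over `j` and `k`, of the `i`-th
component `u_i(x)` of the linear convolution operator `v ↦ u`. -/
def oseenIntegrand (U v : E3 → E3) (i : Fin 3) (x y : E3) : ℝ :=
  ∑ j, ∑ k, dG i j k (x - y) * (U y j * v y k + v y j * U y k)

variable {α K : ℝ} {U v : E3 → E3}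

lemma aestronglyMeasurable_oseenIntegrand (hU : AEStronglyMeasurable U)
    (hv : AEStronglyMeasurable v) (i : Fin 3) (x : E3) :
    AEStronglyMeasurable (oseenIntegrand U v i x) := by
  have hdG (j k : Fin 3) : AEStronglyMeasurable fun y => dG i j k (x - y) :=
    ((measurable_dG i j k).comp (measurable_const.sub measurable_id)).aestronglyMeasurable
  have hcoord {f : E3 → E3} (hf : AEStronglyMeasurable f) (j : Fin 3) :
      AEStronglyMeasurable fun y => f y j :=
    (EuclideanSpace.proj (𝕜 := ℝ) j).continuous.comp_aestronglyMeasurable hf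
  exact Finset.aestronglyMeasurable_fun_sum _ fun j _ =>
    Finset.aestronglyMeasurable_fun_sum _ fun k _ =>
      (hdG j k).mul (((hcoord hU j).mul (hcoord hv k)).add ((hcoord hv j).mul (hcoord hU k)))

lemma norm_mul_norm_le_Xnorm_mul_rpow (hU : ∀ x, ‖U x‖ ≤ K / (1 + ‖x‖))
    (hv : BddAbove (Set.range fun x : E3 => (1 + ‖x‖) ^ α * ‖v x‖)) (y : E3) :
    ‖U y‖ * ‖v y‖ ≤ K * Xnorm α v * (1 + ‖y‖) ^ (-(1 + α)) := by
  calc ‖U y‖ * ‖v y‖ ≤ K / (1 + ‖y‖) * (Xnorm α v * (1 + ‖y‖) ^ (-α)) :=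
        mul_le_mul (hU y) (norm_le_Xnorm_mul_rpow hv y) (norm_nonneg _)
          ((norm_nonneg _).trans (hU y))
    _ = K * Xnorm α v * (1 + ‖y‖) ^ (-(1 + α)) := by
        rw [neg_add, rpow_add (by positivity), rpow_neg_one]
        ring

lemma exists_ae_norm_oseenIntegrand_le (α : ℝ) :
    ∃ D, 0 ≤ D ∧ ∀ (K : ℝ) (U v : E3 → E3), (∀ x, ‖U x‖ ≤ K / (1 + ‖x‖)) →
      BddAbove (Set.range fun x : E3 => (1 + ‖x‖) ^ α * ‖v x‖) →
      ∀ i x, ∀ᵐ y, ‖oseenIntegrand U v i x y‖ ≤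
        D * K * Xnorm α v * (‖x - y‖ ^ (-2 : ℝ) * (1 + ‖y‖) ^ (-(1 + α))) := by
  obtain ⟨D, hD₀, hD⟩ := exists_abs_dG_le
  refine ⟨18 * D, by positivity, fun K U v hU hv i x => ?_⟩
  filter_upwards [Measure.ae_ne volume x] with y hy
  calc ‖oseenIntegrand U v i x y‖
      ≤ 2 * Fintype.card (Fin 3) ^ 2 * (D * ‖x - y‖ ^ (-2 : ℝ)) * (‖U y‖ * ‖v y‖) :=
        norm_sum_mul_add_le (fun j k => hD i j k _ (sub_ne_zero.mpr hy.symm)) (U y) (v y)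
    _ ≤ 2 * Fintype.card (Fin 3) ^ 2 * (D * ‖x - y‖ ^ (-2 : ℝ)) *
          (K * Xnorm α v * (1 + ‖y‖) ^ (-(1 + α))) :=
        mul_le_mul_of_nonneg_left (norm_mul_norm_le_Xnorm_mul_rpow hU hv y) (by positivity)
    _ = 18 * D * K * Xnorm α v * (‖x - y‖ ^ (-2 : ℝ) * (1 + ‖y‖) ^ (-(1 + α))) := by
        rw [Fintype.card_fin]
        push_cast
        ring

end OseenConvolution

theorem linear_convolution_estimate_general (α : ℝ) (hα₀ : 0 < α) (hα₂ : α < 2) :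
    ∃ c : ℝ, ∀ (K : ℝ) (U v : E3 → E3), AEStronglyMeasurable U → AEStronglyMeasurable v →
      (∀ x, ‖U x‖ ≤ K / (1 + ‖x‖)) →
      BddAbove (Set.range fun x : E3 => (1 + ‖x‖) ^ α * ‖v x‖) →
      (∀ x i, Integrable (oseenIntegrand U v i x)) ∧
      ∀ u : E3 → E3, (∀ x i, u x i = ∫ y, oseenIntegrand U v i x y) →
        Xnorm α u ≤ c * K * Xnorm α v := by
  have hdim : (Module.finrank ℝ E3 : ℝ) = 3 := by simp
  have ha : (2 : ℝ) < Module.finrank ℝ E3 := by linarith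
  have hb : 1 + α < Module.finrank ℝ E3 := by linarith
  have hab : Module.finrank ℝ E3 < 2 + (1 + α) := by linarith
  obtain ⟨D, hD₀, hD⟩ := exists_ae_norm_oseenIntegrand_le α
  obtain ⟨C, hC⟩ := exists_integral_rpow_norm_sub_mul_rpow_le (volume : Measure E3) ha hb hab
  rw [hdim, show (3 : ℝ) - 2 - (1 + α) = -α by ring] at hC
  refine ⟨3 * D * C, fun K U v hUm hvm hU hv => ?_⟩
  have hK : 0 ≤ K := by simpa using (norm_nonneg _).trans (hU 0)
  have hB : 0 ≤ D * K * Xnorm α v := mul_nonneg (mul_nonneg hD₀ hK) (Xnorm_nonneg α v)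
  have hdom (x : E3) := (integrable_rpow_norm_sub_mul_rpow volume ha hb hab x).const_mul
    (D * K * Xnorm α v)
  refine ⟨fun x i => (hdom x).mono' (aestronglyMeasurable_oseenIntegrand hUm hvm i x)
    (hD K U v hU hv i x), fun u hu => Xnorm_le_of_norm_le_mul_rpow fun x => ?_⟩
  have hcomp (i : Fin 3) : ‖u x i‖ ≤ D * K * Xnorm α v * (C * (1 + ‖x‖) ^ (-α)) := by
    rw [hu]
    refine (norm_integral_le_of_norm_le (hdom x) (hD K U v hU hv i x)).trans ?_
    rw [integral_const_mul]
    exact mul_le_mul_of_nonneg_left (hC x) hB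
  refine (norm_le_card_mul_of_norm_apply_le hcomp).trans_eq ?_
  rw [Fintype.card_fin]
  push_cast
  ring

theorem linear_convolution_estimate (α : ℝ) (hα1 : 1 < α) (hα2 : α < 2) :
    ∃ c : ℝ, ∀ K : ℝ, 0 ≤ K → ∀ U : E3 → E3, Measurable U →
      (∀ x : E3, ‖U x‖ ≤ K / (1 + ‖x‖)) →
      ∀ v : E3 → E3, Continuous v →
      BddAbove (Set.range fun x : E3 => (1 + ‖x‖) ^ α * ‖v x‖) →
      (∀ (x : E3) (i : Fin 3),
        Integrable (fun y : E3 =>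
          ∑ j, ∑ k, dG i j k (x - y) * (U y j * v y k + v y j * U y k))) ∧
      (∀ u : E3 → E3,
        (∀ (x : E3) (i : Fin 3),
          u x i = ∫ y : E3,
            ∑ j, ∑ k, dG i j k (x - y) * (U y j * v y k + v y j * U y k)) →
        Xnorm α u ≤ c * K * Xnorm α v) := by
  obtain ⟨c, hc⟩ := linear_convolution_estimate_general α (by linarith) hα2
  exact ⟨c, fun K _ U hUm hU v hvc hv =>
    hc K U v hUm.aestronglyMeasurable hvc.aestronglyMeasurable hU hv⟩
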